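/- Relative loss ratio bound: for every n ≥ 1 with L_{nΛμ} > 0, L_{nΛξ}/L_{nΛμ} ≤ 1 + 2√(H_n/L_{nΛμ}) + 2 H_n/L_{nΛμ}; in particular L_{nΛξ}/L_{nΛμ} → 1 whenever L_{nΛμ} → ∞ and H_n stays bounded. -/

import Mathlib

open Finset Filter

/-- A probability distribution on finite binary strings:
nonnegative, `1` on the empty string, and additive under one-symbol extension. -/
def IsDistr (ρ : List Bool → ℝ) : Prop :=
  (∀ x, 0 ≤ ρ x) ∧ ρ [] = 1 ∧
    ∀ x, ρ x = ρ (x ++ [false]) + ρ (x ++ [true])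

/-- Conditional probability `ρ(b | x) = ρ(xb)/ρ(x)` (junk `0` when `ρ x = 0`). -/
noncomputable def condP (ρ : List Bool → ℝ) (x : List Bool) (b : Bool) : ℝ :=
  ρ (x ++ [b]) / ρ x

/-- Instantaneous relative entropy
`h_t(x) = ∑_b μ(b|x) ln (μ(b|x)/ξ(b|x))` (conventions `0·ln 0 = 0` are automatic
since `Real.log 0 = 0` and `r/0 = 0`). -/
noncomputable def instEnt (μ ξ : List Bool → ℝ) (x : List Bool) : ℝ :=
  ∑ b : Bool, condP μ x b * Real.log (condP μ x b / condP ξ x b)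

/-- Total relative entropy `H_n = ∑_{t=1}^n ∑_{x_{<t}} μ(x_{<t}) h_t(x_{<t})`
(histories of length `t-1`, i.e. length `t ∈ {0,…,n-1}`). -/
noncomputable def totalEnt (μ ξ : List Bool → ℝ) (n : ℕ) : ℝ :=
  ∑ t ∈ Finset.range n, ∑ x : Fin t → Bool,
    μ (List.ofFn x) * instEnt μ ξ (List.ofFn x)

/-- `ρ`-expected loss of predicting `y` after history `x`. -/
noncomputable def expLoss (ρ : List Bool → ℝ) (l : Bool → Bool → ℝ)
    (x : List Bool) (y : Bool) : ℝ :=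
  ∑ b : Bool, condP ρ x b * l b y

/-- `Y` is a fixed choice of minimizers for the scheme `Λ_ρ`. -/
def IsPredictor (ρ : List Bool → ℝ) (l : Bool → Bool → ℝ)
    (Y : List Bool → Bool) : Prop :=
  ∀ x y, expLoss ρ l x (Y x) ≤ expLoss ρ l x y

/-- Total `μ`-expected loss `L_{nΛ}` of the scheme with minimizers `Y`. -/
noncomputable def totalLoss (μ : List Bool → ℝ) (l : Bool → Bool → ℝ)
    (Y : List Bool → Bool) (n : ℕ) : ℝ :=
  ∑ t ∈ Finset.range n, ∑ x : Fin t → Bool,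
    μ (List.ofFn x) * expLoss μ l (List.ofFn x) (Y (List.ofFn x))

/-!
The heart of the matter is a single prediction step. Let `p` and `q` be the true and the assumed
distribution of the next symbol, and let the losses `a` and `b` of two predictions take values in
`[0, 1]`, with `b` at least as good as `a` under `q`. For `A > 0` the function
`f = A / (1 + 2 * A) * (b - (1 + A) * a)` satisfies `exp f ≤ 1 + c * (b - a)` for a suitable
`c ≥ 0`, so its exponential moment under `q` is at most `1`. By the Gibbs variational principle the
mean of `f` under `p` is then at most the relative entropy of `p` and `q`, that is,
`E_p b ≤ (1 + A) * E_p a + (2 + 1 / A) * D(p ‖ q)`. This inequality is linear, so it adds up over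
all steps and histories, and optimizing over `A` produces the square root.
-/

section ExponentialLoss

open Real

variable {A a b t : ℝ}

-- The constant `c = 2 * A / (2 + 3 * A)` solves `2 * c / (c + 2) = A / (1 + 2 * A)`.
lemma exp_div_one_add_two_mul_le (hA : 0 ≤ A) :
    exp (A / (1 + 2 * A)) ≤ 1 + 2 * A / (2 + 3 * A) := by
  have hc : 0 ≤ 2 * A / (2 + 3 * A) := by positivity
  rw [← le_log_iff_exp_le (by positivity)]
  convert le_log_one_add_of_nonneg hc using 1
  field_simp
  ring

lemma exp_neg_div_one_add_two_mul_le (hA : 0 ≤ A) :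
    exp (-(A * (1 + A) / (1 + 2 * A))) ≤ 1 - 2 * A / (2 + 3 * A) := by
  have hu : 0 ≤ A * (1 + A) / (1 + 2 * A) := by positivity
  have hinv : 1 - 2 * A / (2 + 3 * A) = (1 + 2 * A / (2 + A))⁻¹ := by
    field_simp
    ring
  rw [exp_neg, hinv]
  gcongr
  refine le_trans ?_ (quadratic_le_exp_of_nonneg hu)
  rw [← sub_nonneg]
  have hdiff : 1 + A * (1 + A) / (1 + 2 * A) + (A * (1 + A) / (1 + 2 * A)) ^ 2 / 2 -
      (1 + 2 * A / (2 + A)) =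
        A ^ 3 * (A ^ 2 + 8 * A + 3) / (2 * (1 + 2 * A) ^ 2 * (2 + A)) := by
    field_simp
    ring
  rw [hdiff]
  positivity

lemma exp_mul_le_one_add_mul (ht : t ∈ Set.Icc (0 : ℝ) 1) (s : ℝ) :
    exp (t * s) ≤ 1 + t * (exp s - 1) := by
  have h := convexOn_exp.2 (Set.mem_univ 0) (Set.mem_univ s) (sub_nonneg.2 ht.2) ht.1
    (sub_add_cancel 1 t)
  simp only [smul_eq_mul, mul_zero, zero_add, exp_zero, mul_one] at h
  linarith

lemma exp_mul_sub_one_add_mul_le (hA : 0 ≤ A) (ha : a ∈ Set.Icc (0 : ℝ) 1)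
    (hb : b ∈ Set.Icc (0 : ℝ) 1) :
    exp (A / (1 + 2 * A) * (b - (1 + A) * a)) ≤ 1 + 2 * A / (2 + 3 * A) * (b - a) := by
  set c := 2 * A / (2 + 3 * A)
  have hexp_b : exp (b * (A / (1 + 2 * A))) ≤ 1 + c * b := by
    have := mul_le_mul_of_nonneg_left (exp_div_one_add_two_mul_le hA) hb.1
    linarith [exp_mul_le_one_add_mul hb (A / (1 + 2 * A))]
  have hexp_a : exp (a * -(A * (1 + A) / (1 + 2 * A))) ≤ 1 - c * a := by
    have := mul_le_mul_of_nonneg_left (exp_neg_div_one_add_two_mul_le hA) ha.1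
    linarith [exp_mul_le_one_add_mul ha (-(A * (1 + A) / (1 + 2 * A)))]
  have hc : 0 ≤ c ^ 2 * (a * b) := mul_nonneg (sq_nonneg c) (mul_nonneg ha.1 hb.1)
  calc exp (A / (1 + 2 * A) * (b - (1 + A) * a))
      = exp (b * (A / (1 + 2 * A))) * exp (a * -(A * (1 + A) / (1 + 2 * A))) := by
        rw [← exp_add]
        ring_nf
    _ ≤ (1 + c * b) * (1 - c * a) :=
        mul_le_mul hexp_b hexp_a (exp_nonneg _) ((exp_nonneg _).trans hexp_b)
    _ ≤ 1 + c * (b - a) := by linarith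

end ExponentialLoss

section RelativeEntropy

variable {α : Type*} [Fintype α] {p q f a b : α → ℝ} {A : ℝ}

/-- The relative entropy (Kullback–Leibler divergence) `D(p ‖ q)` of two distributions on a finite
alphabet. The conventions of `Real.log` and of division give `0` for the terms with `p i = 0`, but
also for those with `q i = 0`, so it is meaningful only when `q i = 0` implies `p i = 0`. -/
noncomputable def relEntropy (p q : α → ℝ) : ℝ :=
  ∑ i, p i * Real.log (p i / q i)

lemma mul_le_mul_log_div_add {x y : ℝ} (hx : 0 ≤ x) (hy : 0 ≤ y) (hxy : y = 0 → x = 0) (t : ℝ) :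
    x * t ≤ x * Real.log (x / y) + (y * Real.exp t - x) := by
  rcases hx.eq_or_lt with rfl | hx
  · simp only [zero_mul, sub_zero, zero_add]
    positivity
  have hy : 0 < y := hy.lt_of_ne' fun h => hx.ne' (hxy h)
  have hlog : t - Real.log (x / y) ≤ y * Real.exp t / x - 1 := by
    have h := Real.log_le_sub_one_of_pos (x := y * Real.exp t / x) (by positivity)
    rw [Real.log_div (by positivity) hx.ne', Real.log_mul hy.ne' (Real.exp_ne_zero t),
      Real.log_exp] at h
    rw [Real.log_div hx.ne' hy.ne']
    linarith
  calc x * t = x * Real.log (x / y) + x * (t - Real.log (x / y)) := by ring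
    _ ≤ x * Real.log (x / y) + x * (y * Real.exp t / x - 1) := by gcongr
    _ = x * Real.log (x / y) + (y * Real.exp t - x) := by field_simp

lemma sum_mul_le_relEntropy (hp : p ∈ stdSimplex ℝ α) (hq : ∀ i, 0 ≤ q i)
    (hpq : ∀ i, q i = 0 → p i = 0) (hf : ∑ i, q i * Real.exp (f i) ≤ 1) :
    ∑ i, p i * f i ≤ relEntropy p q := by
  have h : ∑ i, p i * f i ≤ ∑ i, (p i * Real.log (p i / q i) + (q i * Real.exp (f i) - p i)) :=
    sum_le_sum fun i _ => mul_le_mul_log_div_add (hp.1 i) (hq i) (hpq i) (f i)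
  rw [sum_add_distrib, sum_sub_distrib, hp.2] at h
  unfold relEntropy
  linarith

lemma relEntropy_nonneg (hp : p ∈ stdSimplex ℝ α) (hq : q ∈ stdSimplex ℝ α)
    (hpq : ∀ i, q i = 0 → p i = 0) : 0 ≤ relEntropy p q := by
  simpa using sum_mul_le_relEntropy (f := 0) hp hq.1 hpq (by simp [hq.2])

lemma sum_mul_exp_le_one (hq : q ∈ stdSimplex ℝ α) (ha : ∀ i, a i ∈ Set.Icc (0 : ℝ) 1)
    (hb : ∀ i, b i ∈ Set.Icc (0 : ℝ) 1) (hab : ∑ i, q i * b i ≤ ∑ i, q i * a i) (hA : 0 ≤ A) :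
    ∑ i, q i * Real.exp (A / (1 + 2 * A) * (b i - (1 + A) * a i)) ≤ 1 := by
  set c := 2 * A / (2 + 3 * A)
  have hc : 0 ≤ c := by positivity
  calc ∑ i, q i * Real.exp (A / (1 + 2 * A) * (b i - (1 + A) * a i))
      ≤ ∑ i, q i * (1 + c * (b i - a i)) := sum_le_sum fun i _ =>
        mul_le_mul_of_nonneg_left (exp_mul_sub_one_add_mul_le hA (ha i) (hb i)) (hq.1 i)
    _ = ∑ i, q i + c * (∑ i, q i * b i - ∑ i, q i * a i) := by
        rw [← sum_sub_distrib, mul_sum, ← sum_add_distrib]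
        exact sum_congr rfl fun i _ => by ring
    _ ≤ 1 := by
        rw [hq.2]
        linarith [mul_nonneg hc (sub_nonneg.2 hab)]

lemma sum_mul_le_add_relEntropy (hp : p ∈ stdSimplex ℝ α) (hq : q ∈ stdSimplex ℝ α)
    (hpq : ∀ i, q i = 0 → p i = 0) (ha : ∀ i, a i ∈ Set.Icc (0 : ℝ) 1)
    (hb : ∀ i, b i ∈ Set.Icc (0 : ℝ) 1) (hab : ∑ i, q i * b i ≤ ∑ i, q i * a i) (hA : 0 < A) :
    ∑ i, p i * b i ≤ (1 + A) * ∑ i, p i * a i + (2 + 1 / A) * relEntropy p q := by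
  have hgibbs := sum_mul_le_relEntropy hp hq.1 hpq (sum_mul_exp_le_one hq ha hb hab hA.le)
  have hmean : ∑ i, p i * (A / (1 + 2 * A) * (b i - (1 + A) * a i)) =
      (∑ i, p i * b i - (1 + A) * ∑ i, p i * a i) / (2 + 1 / A) := by
    rw [mul_sum, ← sum_sub_distrib, sum_div]
    refine sum_congr rfl fun i _ => ?_
    field_simp
    ring
  rw [hmean, div_le_iff₀' (by positivity)] at hgibbs
  linarith

end RelativeEntropy

-- The choice `A = √q` is optimal, but it has to be perturbed because `q` may vanish.
lemma le_one_add_two_mul_sqrt_add {r q : ℝ} (hq : 0 ≤ q)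
    (h : ∀ A > 0, r ≤ 1 + A + (2 + 1 / A) * q) : r ≤ 1 + 2 * √q + 2 * q := by
  refine le_of_forall_pos_le_add fun ε hε => ?_
  have hA : 0 < √q + ε := by positivity
  have hdiv : 1 / (√q + ε) * q ≤ √q := by
    rw [one_div_mul_eq_div, div_le_iff₀ hA]
    nlinarith [Real.mul_self_sqrt hq, mul_nonneg (Real.sqrt_nonneg q) hε.le]
  linarith [h _ hA]

lemma tendsto_div_zero_of_bounded_of_atTop {α : Type*} {F : Filter α} {u v : α → ℝ} {C : ℝ}
    (hu : ∀ n, 0 ≤ u n) (huC : ∀ n, u n ≤ C) (hv : Tendsto v F atTop) :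
    Tendsto (fun n => u n / v n) F (nhds 0) := by
  refine squeeze_zero' ?_ ?_ (hv.const_div_atTop C) <;>
    filter_upwards [hv.eventually_gt_atTop 0] with n hn
  · exact div_nonneg (hu n) hn.le
  · exact div_le_div_of_nonneg_right (huC n) hn.le

lemma condP_eq_zero {μ ξ : List Bool → ℝ} (hμξ : ∀ x, ξ x = 0 → μ x = 0) {x : List Bool}
    (hx : μ x ≠ 0) {b : Bool} (hb : condP ξ x b = 0) : condP μ x b = 0 := by
  have hξb : ξ (x ++ [b]) = 0 := (div_eq_zero_iff.1 hb).resolve_right fun h => hx (hμξ x h)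
  rw [condP, hμξ _ hξb, zero_div]

namespace IsDistr

variable {μ ξ : List Bool → ℝ} {l : Bool → Bool → ℝ} {Yμ Yξ : List Bool → Bool}

lemma condP_mem_stdSimplex (hμ : IsDistr μ) {x : List Bool} (hx : μ x ≠ 0) :
    condP μ x ∈ stdSimplex ℝ Bool := by
  refine ⟨fun b => div_nonneg (hμ.1 _) (hμ.1 x), ?_⟩
  rw [Fintype.sum_bool, condP, condP, ← add_div, add_comm, ← hμ.2.2, div_self hx]

lemma instEnt_nonneg (hμ : IsDistr μ) (hξ : IsDistr ξ) (hμξ : ∀ x, ξ x = 0 → μ x = 0)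
    {x : List Bool} (hx : μ x ≠ 0) : 0 ≤ instEnt μ ξ x :=
  relEntropy_nonneg (hμ.condP_mem_stdSimplex hx) (hξ.condP_mem_stdSimplex fun h => hx (hμξ x h))
    fun _ => condP_eq_zero hμξ hx

lemma expLoss_le (hμ : IsDistr μ) (hξ : IsDistr ξ) (hμξ : ∀ x, ξ x = 0 → μ x = 0)
    (hl : ∀ a y, l a y ∈ Set.Icc (0 : ℝ) 1) {x : List Bool} (hx : μ x ≠ 0) {y z : Bool}
    (hyz : expLoss ξ l x z ≤ expLoss ξ l x y) {A : ℝ} (hA : 0 < A) :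
    expLoss μ l x z ≤ (1 + A) * expLoss μ l x y + (2 + 1 / A) * instEnt μ ξ x :=
  sum_mul_le_add_relEntropy (hμ.condP_mem_stdSimplex hx)
    (hξ.condP_mem_stdSimplex fun h => hx (hμξ x h)) (fun _ => condP_eq_zero hμξ hx)
    (fun b => hl b y) (fun b => hl b z) hyz hA

lemma totalEnt_nonneg (hμ : IsDistr μ) (hξ : IsDistr ξ) (hμξ : ∀ x, ξ x = 0 → μ x = 0) (n : ℕ) :
    0 ≤ totalEnt μ ξ n := by
  refine sum_nonneg fun t _ => sum_nonneg fun x _ => ?_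
  by_cases hx : μ (List.ofFn x) = 0
  · rw [hx, zero_mul]
  · exact mul_nonneg (hμ.1 _) (hμ.instEnt_nonneg hξ hμξ hx)

lemma totalLoss_le_totalLoss (hμ : IsDistr μ) (hYμ : IsPredictor μ l Yμ) (Y : List Bool → Bool)
    (n : ℕ) : totalLoss μ l Yμ n ≤ totalLoss μ l Y n :=
  sum_le_sum fun _ _ => sum_le_sum fun _ _ => mul_le_mul_of_nonneg_left (hYμ _ _) (hμ.1 _)

lemma totalLoss_le (hμ : IsDistr μ) (hξ : IsDistr ξ) (hμξ : ∀ x, ξ x = 0 → μ x = 0)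
    (hl : ∀ a y, l a y ∈ Set.Icc (0 : ℝ) 1) (hYξ : IsPredictor ξ l Yξ) (Y : List Bool → Bool)
    (n : ℕ) {A : ℝ} (hA : 0 < A) :
    totalLoss μ l Yξ n ≤ (1 + A) * totalLoss μ l Y n + (2 + 1 / A) * totalEnt μ ξ n := by
  simp only [totalLoss, totalEnt, mul_sum, ← sum_add_distrib]
  refine sum_le_sum fun t _ => sum_le_sum fun x _ => ?_
  by_cases hx : μ (List.ofFn x) = 0
  · simp only [hx, zero_mul, mul_zero, add_zero, le_refl]
  · have hstep := mul_le_mul_of_nonneg_left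
      (hμ.expLoss_le hξ hμξ hl hx (hYξ _ (Y (List.ofFn x))) hA) (hμ.1 (List.ofFn x))
    linarith

lemma totalLoss_div_le (hμ : IsDistr μ) (hξ : IsDistr ξ) (hμξ : ∀ x, ξ x = 0 → μ x = 0)
    (hl : ∀ a y, l a y ∈ Set.Icc (0 : ℝ) 1) (hYξ : IsPredictor ξ l Yξ) (Y : List Bool → Bool)
    (n : ℕ) (hL : 0 < totalLoss μ l Y n) :
    totalLoss μ l Yξ n / totalLoss μ l Y n ≤
      1 + 2 * √(totalEnt μ ξ n / totalLoss μ l Y n) +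
        2 * (totalEnt μ ξ n / totalLoss μ l Y n) := by
  refine le_one_add_two_mul_sqrt_add (div_nonneg (hμ.totalEnt_nonneg hξ hμξ n) hL.le)
    fun A hA => ?_
  calc totalLoss μ l Yξ n / totalLoss μ l Y n
      ≤ ((1 + A) * totalLoss μ l Y n + (2 + 1 / A) * totalEnt μ ξ n) / totalLoss μ l Y n := by
        gcongr
        exact hμ.totalLoss_le hξ hμξ hl hYξ Y n hA
    _ = 1 + A + (2 + 1 / A) * (totalEnt μ ξ n / totalLoss μ l Y n) := by
        rw [add_div, mul_div_cancel_right₀ _ hL.ne', mul_div_assoc]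

lemma tendsto_totalLoss_div (hμ : IsDistr μ) (hξ : IsDistr ξ) (hμξ : ∀ x, ξ x = 0 → μ x = 0)
    (hl : ∀ a y, l a y ∈ Set.Icc (0 : ℝ) 1) (hYμ : IsPredictor μ l Yμ) (hYξ : IsPredictor ξ l Yξ)
    (hL : Tendsto (totalLoss μ l Yμ) atTop atTop) {C : ℝ} (hC : ∀ n, totalEnt μ ξ n ≤ C) :
    Tendsto (fun n => totalLoss μ l Yξ n / totalLoss μ l Yμ n) atTop (nhds 1) := by
  have hq : Tendsto (fun n => totalEnt μ ξ n / totalLoss μ l Yμ n) atTop (nhds 0) :=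
    tendsto_div_zero_of_bounded_of_atTop (hμ.totalEnt_nonneg hξ hμξ) hC hL
  have hupper : Tendsto (fun n => 1 + 2 * √(totalEnt μ ξ n / totalLoss μ l Yμ n) +
      2 * (totalEnt μ ξ n / totalLoss μ l Yμ n)) atTop (nhds 1) := by
    simpa using ((hq.sqrt.const_mul 2).const_add 1).add (hq.const_mul 2)
  refine tendsto_of_tendsto_of_tendsto_of_le_of_le' tendsto_const_nhds hupper ?_ ?_ <;>
    filter_upwards [hL.eventually_gt_atTop 0] with n hn
  · exact (one_le_div hn).2 (hμ.totalLoss_le_totalLoss hYμ Yξ n)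
  · exact hμ.totalLoss_div_le hξ hμξ hl hYξ Yμ n hn

end IsDistr

section Mixture

variable {ι : Type*} {μs : ι → List Bool → ℝ} {w : ι → ℝ} {ξ : List Bool → ℝ}

lemma isDistr_mixture (hμs : ∀ i, IsDistr (μs i)) (hw : ∀ i, 0 ≤ w i) (hw1 : HasSum w 1)
    (hξ : ∀ x, HasSum (fun i => w i * μs i x) (ξ x)) : IsDistr ξ := by
  refine ⟨fun x => (hξ x).nonneg fun i => mul_nonneg (hw i) ((hμs i).1 x), ?_, fun x => ?_⟩
  · refine (hξ []).unique ?_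
    simpa only [(hμs _).2.1, mul_one] using hw1
  · refine (hξ x).unique ?_
    simpa only [← mul_add, ← (hμs _).2.2] using (hξ (x ++ [false])).add (hξ (x ++ [true]))

lemma eq_zero_of_mixture_eq_zero (hμs : ∀ i, IsDistr (μs i)) (hw : ∀ i, 0 < w i)
    (hξ : ∀ x, HasSum (fun i => w i * μs i x) (ξ x)) (i : ι) (x : List Bool) (hx : ξ x = 0) :
    μs i x = 0 := by
  have hdom : w i * μs i x ≤ ξ x :=
    le_hasSum (hξ x) i fun j _ => mul_nonneg (hw j).le ((hμs j).1 x)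
  exact le_antisymm (nonpos_of_mul_nonpos_right (hx ▸ hdom) (hw i)) ((hμs i).1 x)

end Mixture

theorem loss_ratio_bound_general {μ ξ : List Bool → ℝ} (hμ : IsDistr μ) (hξ : IsDistr ξ)
    (hμξ : ∀ x, ξ x = 0 → μ x = 0) {l : Bool → Bool → ℝ} (hl : ∀ a y, l a y ∈ Set.Icc (0 : ℝ) 1)
    {Yξ : List Bool → Bool} (hYξ : IsPredictor ξ l Yξ) :
    (∀ Y n, 0 < totalLoss μ l Y n →
      totalLoss μ l Yξ n / totalLoss μ l Y n ≤
        1 + 2 * √(totalEnt μ ξ n / totalLoss μ l Y n) +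
          2 * (totalEnt μ ξ n / totalLoss μ l Y n)) ∧
    (∀ Yμ, IsPredictor μ l Yμ → Tendsto (totalLoss μ l Yμ) atTop atTop →
      (∃ C, ∀ n, totalEnt μ ξ n ≤ C) →
      Tendsto (fun n => totalLoss μ l Yξ n / totalLoss μ l Yμ n) atTop (nhds 1)) :=
  ⟨hμ.totalLoss_div_le hξ hμξ hl hYξ,
    fun _ hYμ hL ⟨_, hC⟩ => hμ.tendsto_totalLoss_div hξ hμξ hl hYμ hYξ hL hC⟩

/-- relative loss ratio bound: whenever `L_{nΛμ} > 0`,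
`L_{nΛξ}/L_{nΛμ} ≤ 1 + 2√(H_n/L_{nΛμ}) + 2 H_n/L_{nΛμ}`; in particular the
ratio tends to `1` whenever `L_{nΛμ} → ∞` and `H_n` stays bounded. -/
theorem loss_ratio_bound {ι : Type*} [Countable ι]
    (μs : ι → List Bool → ℝ) (w : ι → ℝ)
    (hμs : ∀ i, IsDistr (μs i)) (hw : ∀ i, 0 < w i) (hw1 : HasSum w 1)
    (ξ : List Bool → ℝ) (hξ : ∀ x, HasSum (fun i => w i * μs i x) (ξ x))
    (i₀ : ι)
    (l : Bool → Bool → ℝ) (hl : ∀ a y, l a y ∈ Set.Icc (0 : ℝ) 1)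
    (Yμ Yξ : List Bool → Bool)
    (hYμ : IsPredictor (μs i₀) l Yμ) (hYξ : IsPredictor ξ l Yξ) :
    (∀ n : ℕ, 1 ≤ n → 0 < totalLoss (μs i₀) l Yμ n →
      totalLoss (μs i₀) l Yξ n / totalLoss (μs i₀) l Yμ n ≤
        1 + 2 * Real.sqrt (totalEnt (μs i₀) ξ n / totalLoss (μs i₀) l Yμ n) +
          2 * (totalEnt (μs i₀) ξ n / totalLoss (μs i₀) l Yμ n)) ∧
    (Tendsto (fun n : ℕ => totalLoss (μs i₀) l Yμ n) atTop atTop →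
      (∃ C : ℝ, ∀ n : ℕ, totalEnt (μs i₀) ξ n ≤ C) →
      Tendsto (fun n : ℕ => totalLoss (μs i₀) l Yξ n / totalLoss (μs i₀) l Yμ n)
        atTop (nhds 1)) := by
  have h := loss_ratio_bound_general (hμs i₀) (isDistr_mixture hμs (fun i => (hw i).le) hw1 hξ)
    (eq_zero_of_mixture_eq_zero hμs hw hξ i₀) hl hYξ
  exact ⟨fun n _ => h.1 Yμ n, h.2 Yμ hYμ⟩
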